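/- For every integer n ≥ 36, f(n)² − f(n−6)·f(n+6) > 0. -/

import Mathlib

/-- `f n` is the number of relatively prime subsets of `{1, 2, ..., n}`,
i.e. subsets `A` with `gcd A = 1` (such subsets are automatically nonempty). -/
def f (n : ℕ) : ℕ :=
  ((Finset.Icc 1 n).powerset.filter (fun A => A.gcd id = 1)).card

def gbad (n : ℕ) : ℕ :=
  ((Finset.Icc 1 n).powerset.filter (fun A => ¬ A.gcd id = 1)).card

lemma f_add_gbad (n : ℕ) : f n + gbad n = 2 ^ n := by
  unfold f gbad
  rw [Finset.card_filter_add_card_filter_not]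
  simp

lemma card_mult (n d : ℕ) : ((Finset.Icc 1 n).filter (fun x => d ∣ x)).card = n / d := by
  have h := Nat.Ioc_filter_dvd_card_eq_div n d
  rw [← h]
  congr 1

lemma gbad_lower (n : ℕ) : 2 ^ (n / 2) ≤ gbad n := by
  rw [← card_mult n 2, ← Finset.card_powerset]
  unfold gbad
  apply Finset.card_le_card
  intro A hA
  rw [Finset.mem_powerset] at hA
  rw [Finset.mem_filter, Finset.mem_powerset]
  refine ⟨hA.trans (Finset.filter_subset _ _), fun h => ?_⟩
  have h2 : 2 ∣ A.gcd id := Finset.dvd_gcd (fun x hx => (Finset.mem_filter.1 (hA hx)).2)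
  rw [h] at h2
  omega

lemma gbad_upper (n : ℕ) : gbad n ≤ 2 ^ (n / 2) + n * 2 ^ (n / 3) := by
  let M : ℕ → Finset (Finset ℕ) := fun d => ((Finset.Icc 1 n).filter (fun x => d ∣ x)).powerset
  have hM : ∀ d, (M d).card = 2 ^ (n / d) := by
    intro d
    simp only [M]
    rw [Finset.card_powerset, card_mult]
  have hsub : (Finset.Icc 1 n).powerset.filter (fun A => ¬ A.gcd id = 1) ⊆
      M 2 ∪ (Finset.Icc 3 n).biUnion M := by
    intro A hA
    rw [Finset.mem_filter, Finset.mem_powerset] at hA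
    obtain ⟨hA, hg⟩ := hA
    rcases A.eq_empty_or_nonempty with rfl | ⟨a, ha⟩
    · simp [M]
    have hin : A ∈ M (A.gcd id) := by
      simp only [M, Finset.mem_powerset]
      intro x hx
      exact Finset.mem_filter.2 ⟨hA hx, Finset.gcd_dvd (f := id) hx⟩
    have han := Finset.mem_Icc.1 (hA ha)
    have hd : A.gcd id ∣ a := Finset.gcd_dvd (f := id) ha
    have hle := Nat.le_of_dvd (by omega) hd
    have hpos := Nat.pos_of_dvd_of_pos hd (by omega)
    rw [Finset.mem_union, Finset.mem_biUnion]
    by_cases h2 : A.gcd id = 2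
    · left
      rwa [h2] at hin
    · right
      exact ⟨_, Finset.mem_Icc.2 ⟨by omega, by omega⟩, hin⟩
  refine (Finset.card_le_card hsub).trans ((Finset.card_union_le _ _).trans ?_)
  rw [hM]
  gcongr
  refine (Finset.card_biUnion_le_card_mul _ _ (2 ^ (n / 3)) ?_).trans ?_
  · intro d hd
    rw [hM]
    exact Nat.pow_le_pow_right (by norm_num)
      (Nat.div_le_div_left (Finset.mem_Icc.1 hd).1 (by norm_num))
  · gcongr
    simp

lemma arith : ∀ n : ℕ, 36 ≤ n → n * 2 ^ (n / 3) ≤ 3 * 2 ^ (n / 2) := by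
  intro n
  induction n using Nat.strong_induction_on with
  | _ n ih =>
    intro hn
    by_cases h : n < 42
    · interval_cases n <;> norm_num
    · obtain ⟨m, rfl⟩ : ∃ m, n = m + 6 := ⟨n - 6, by omega⟩
      have := ih m (by omega) (by omega)
      have h3 : (m + 6) / 3 = m / 3 + 2 := by omega
      have h2 : (m + 6) / 2 = m / 2 + 3 := by omega
      rw [h3, h2, pow_add, pow_add]
      have : (m + 6) * 2 ^ (m / 3) ≤ (2 * m) * 2 ^ (m / 3) :=
        Nat.mul_le_mul_right _ (by omega)
      nlinarith

theorem stmt_8 (n : ℕ) (hn : 36 ≤ n) :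
    (f n : ℤ) ^ 2 - f (n - 6) * f (n + 6) > 0 := by
  obtain ⟨m, rfl⟩ : ∃ m, n = m + 6 := ⟨n - 6, by omega⟩
  have hu := gbad_upper (m + 6)
  have ha := arith (m + 6) hn
  have hl := gbad_lower m
  have h2 : (m + 6) / 2 = m / 2 + 3 := by omega
  have e : 2 ^ ((m + 6) / 2) = 8 * 2 ^ (m / 2) := by rw [h2, pow_add]; ring
  have key : gbad (m + 6) ≤ 32 * gbad m := by omega
  have hpos : 0 < gbad (m + 6) := lt_of_lt_of_le (by positivity) (gbad_lower (m + 6))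
  have f0 := f_add_gbad m
  have f1 := f_add_gbad (m + 6)
  have f2 := f_add_gbad (m + 6 + 6)
  rw [Nat.add_sub_cancel]
  rw [pow_add] at f1
  rw [pow_add, pow_add] at f2
  generalize f m = a at *
  generalize f (m + 6) = b at *
  generalize f (m + 6 + 6) = c at *
  generalize gbad m = x at *
  generalize gbad (m + 6) = y at *
  generalize gbad (m + 6 + 6) = z at *
  have hP : 0 < 2 ^ m := by positivity
  generalize 2 ^ m = P at *
  zify at *
  have ea : (a : ℤ) = P - x := by linarith
  have eb : (b : ℤ) = 64 * P - y := by linarith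
  have ec : (c : ℤ) = 4096 * P - z := by linarith
  have haz : 0 ≤ (a : ℤ) * z := by positivity
  have h1 : 0 ≤ (P : ℤ) * (32 * x - y) := mul_nonneg hP.le (by linarith)
  have h3 : 0 < (y : ℤ) ^ 2 := by positivity
  have : (b : ℤ) ^ 2 - a * c = a * z + 128 * (P * (32 * x - y)) + y ^ 2 := by
    rw [eb, ec, ea]; ring
  rw [this]
  linarith
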